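/- Let r ∈ ℤ_{≥0}, λ > −1/2, and n ∈ ℕ. The operator δ_λ maps S_m(ℝ) into S_{m−1}(ℝ) ∩ S(ℝ) for every m ≥ 1 (where at u = 0 the expression δ_λ g is extended by continuity), and for every g ∈ S_n(ℝ) and every v ∈ ℝ one has F_r^λ(δ_λ^n g)(v) = (−1)^n v^{2n} F_r^λ(g)(v). -/

import Mathlib

open Real MeasureTheory Finset

/-- Normalized Bessel function j_lambda(v). -/
noncomputable def nbessel (l v : ℝ) : ℝ :=
  Real.Gamma (l + 1) *
    ∑' k : ℕ, (-1 : ℝ) ^ k / (Nat.factorial k * Real.Gamma (k + l + 1)) * (v / 2) ^ (2 * k)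

/-- Pochhammer symbol (z)_n = z(z+1)...(z+n-1), with (z)_0 = 1. -/
noncomputable def poch (z : ℝ) (n : ℕ) : ℝ := ∏ i ∈ Finset.range n, (z + i)

/-- The kernel e_{2r+1}(v, lambda). -/
noncomputable def e2r1 (r : ℕ) (l : ℝ) (v : ℝ) : ℂ :=
  (nbessel l v : ℂ) + Complex.I * (-1 : ℂ) ^ (r + 1) *
    ((v ^ (2 * r + 1) / (2 ^ (2 * r + 1) * poch (l + 1) (2 * r + 1)) : ℝ) : ℂ) *
    (nbessel (l + (2 * r + 1)) v : ℂ)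

/-- The non-deformed transform F_r^lambda applied to a function g : ℝ → ℂ. -/
noncomputable def Ftrans (r : ℕ) (l : ℝ) (g : ℝ → ℂ) (v : ℝ) : ℂ :=
  ((1 / (2 ^ (l + 1) * Real.Gamma (l + 1)) : ℝ) : ℂ) *
    ∫ u : ℝ, e2r1 r l (u * v) * g u * ((|u| ^ (2 * l + 1) : ℝ) : ℂ)

/-- The differential-difference operator delta_lambda (for u ≠ 0). -/
noncomputable def deltaOp (r : ℕ) (l : ℝ) (g : ℝ → ℂ) (u : ℝ) : ℂ :=
  iteratedDeriv 2 g u + (((2 * l + 1) / u : ℝ) : ℂ) * deriv g u -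
    ((l + 1 / 2 + 2 * r * (l + r + 1) : ℝ) : ℂ) * (g u - g (-u)) / (u : ℂ) ^ 2

/-- g belongs to S_n(ℝ): a Schwartz function whose odd derivatives of order
2s+1 for s < n vanish at the origin. -/
def InSn (n : ℕ) (g : SchwartzMap ℝ ℂ) : Prop :=
  ∀ s : ℕ, s < n → iteratedDeriv (2 * s + 1) (⇑g) 0 = 0

open scoped SchwartzMap ContDiff

theorem hasDerivAt_iteratedDeriv_schwartz (f : 𝓢(ℝ, ℂ)) (k : ℕ) (x : ℝ) :
    HasDerivAt (iteratedDeriv k f) (iteratedDeriv (k + 1) f x) x := by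
  rw [iteratedDeriv_succ]
  exact (((f.smooth ⊤).differentiable_iteratedDeriv k
    (by exact_mod_cast WithTop.coe_lt_top _)) x).hasDerivAt

theorem continuous_iteratedDeriv_schwartz (f : 𝓢(ℝ, ℂ)) (k : ℕ) :
    Continuous (iteratedDeriv k f) :=
  continuous_iff_continuousAt.2 fun x => (hasDerivAt_iteratedDeriv_schwartz f k x).continuousAt

theorem exists_norm_iteratedDeriv_schwartz_le (f : 𝓢(ℝ, ℂ)) (p k : ℕ) :
    ∃ C : ℝ, ∀ x, ‖x‖ ^ p * ‖iteratedDeriv k f x‖ ≤ C := by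
  obtain ⟨C, -, hC⟩ := f.decay p k
  exact ⟨C, fun x => by simpa only [norm_iteratedFDeriv_eq_norm_iteratedDeriv] using hC x⟩

theorem hasDerivAt_integral_pow_mul_iteratedDeriv (f : 𝓢(ℝ, ℂ)) (k : ℕ) (x : ℝ) :
    HasDerivAt (fun u : ℝ => ∫ t in (0 : ℝ)..1, (t : ℂ) ^ k * iteratedDeriv (k + 1) f (t * u))
      (∫ t in (0 : ℝ)..1, (t : ℂ) ^ (k + 1) * iteratedDeriv (k + 2) f (t * x)) x := by
  obtain ⟨C, hC⟩ := exists_norm_iteratedDeriv_schwartz_le f 0 (k + 2)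
  have h1 := continuous_iteratedDeriv_schwartz f (k + 1)
  have h2 := continuous_iteratedDeriv_schwartz f (k + 2)
  refine (intervalIntegral.hasDerivAt_integral_of_dominated_loc_of_deriv_le
    (F := fun u t : ℝ => (t : ℂ) ^ k * iteratedDeriv (k + 1) f (t * u))
    (F' := fun u t : ℝ => (t : ℂ) ^ (k + 1) * iteratedDeriv (k + 2) f (t * u))
    (bound := fun _ => C) Filter.univ_mem ?_ ?_ ?_ ?_ ?_ ?_).2
  · exact .of_forall fun u => Continuous.aestronglyMeasurable (by fun_prop)
  · exact Continuous.intervalIntegrable (by fun_prop) _ _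
  · exact Continuous.aestronglyMeasurable (by fun_prop)
  · refine .of_forall fun t ht u _ => ?_
    rw [Set.uIoc_of_le zero_le_one] at ht
    have := hC (t * u)
    rw [pow_zero, one_mul] at this
    rw [norm_mul, norm_pow, Complex.norm_real, Real.norm_of_nonneg ht.1.le]
    exact (mul_le_of_le_one_left (norm_nonneg _) (pow_le_one₀ ht.1.le ht.2)).trans this
  · exact intervalIntegrable_const
  · refine .of_forall fun t _ u _ => ?_
    have h := (hasDerivAt_iteratedDeriv_schwartz f (k + 1) (t * u)).scomp u
      ((hasDerivAt_id u).const_mul t)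
    convert! h.const_mul ((t : ℂ) ^ k) using 1
    simp only [mul_one, Complex.real_smul]
    ring

/-- A Schwartz function vanishing at the origin is divisible by the coordinate. -/
theorem exists_schwartz_eq_mul (f : 𝓢(ℝ, ℂ)) (hf : f 0 = 0) :
    ∃ q : 𝓢(ℝ, ℂ), (∀ u : ℝ, f u = u * q u) ∧
      ∀ k : ℕ, iteratedDeriv (k + 1) f 0 = (k + 1) * iteratedDeriv k q 0 := by
  set Q : ℕ → ℝ → ℂ := fun k u =>
    ∫ t in (0 : ℝ)..1, (t : ℂ) ^ k * iteratedDeriv (k + 1) f (t * u) with hQ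
  have hQd (k : ℕ) (x : ℝ) : HasDerivAt (Q k) (Q (k + 1) x) x :=
    hasDerivAt_integral_pow_mul_iteratedDeriv f k x
  have hQi (k : ℕ) : iteratedDeriv k (Q 0) = Q k := by
    induction k with
    | zero => simp
    | succ k ih =>
      rw [iteratedDeriv_succ, ih]
      exact funext fun x => (hQd k x).deriv
  have hQs : ContDiff ℝ ∞ (Q 0) :=
    contDiff_of_differentiable_iteratedDeriv fun m _ x => by
      rw [hQi]; exact (hQd m x).differentiableAt
  have hfQ (u : ℝ) : f u = u * Q 0 u := by
    have h := intervalIntegral.integral_eq_sub_of_hasDerivAt (a := 0) (b := 1)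
      (f := fun t : ℝ => f (t * u)) (f' := fun t : ℝ => u * iteratedDeriv 1 f (t * u))
      (fun t _ => by
        have h := (hasDerivAt_iteratedDeriv_schwartz f 0 (t * u)).scomp t
          ((hasDerivAt_id t).mul_const u)
        rw [iteratedDeriv_zero] at h
        convert! h using 1
        simp)
      (Continuous.intervalIntegrable
        (by have := continuous_iteratedDeriv_schwartz f 1; fun_prop) _ _)
    simp only [one_mul, zero_mul, hf, sub_zero] at h
    rw [← h, intervalIntegral.integral_const_mul]
    simp [hQ]
  have hid (k : ℕ) : ∀ u : ℝ,
      iteratedDeriv (k + 1) f u = u * Q (k + 1) u + (k + 1) * Q k u := by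
    induction k with
    | zero =>
      intro u
      have h := ((hasDerivAt_id u).ofReal_comp.mul (hQd 0 u))
      have h2 := hasDerivAt_iteratedDeriv_schwartz f 0 u
      rw [iteratedDeriv_zero] at h2
      rw [h2.unique (h.congr_of_eventuallyEq (.of_forall hfQ))]
      simp [add_comm]
    | succ k ih =>
      intro u
      have h := ((hasDerivAt_id u).ofReal_comp.mul (hQd (k + 1) u)).add
        ((hQd k u).const_mul ((k : ℂ) + 1))
      have h2 := hasDerivAt_iteratedDeriv_schwartz f (k + 1) u
      rw [h2.unique (h.congr_of_eventuallyEq (.of_forall ih))]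
      simp
      ring
  have hdec (p k : ℕ) : ∃ C : ℝ, ∀ u : ℝ, 1 ≤ ‖u‖ → ‖u‖ ^ p * ‖Q k u‖ ≤ C := by
    have key (k : ℕ) (F : ℝ → ℂ) (hF : ∃ C : ℝ, ∀ u : ℝ, 1 ≤ ‖u‖ → ‖u‖ ^ p * ‖F u‖ ≤ C)
        (h : ∀ u : ℝ, u * Q k u = F u) :
        ∃ C : ℝ, ∀ u : ℝ, 1 ≤ ‖u‖ → ‖u‖ ^ p * ‖Q k u‖ ≤ C := by
      obtain ⟨C, hC⟩ := hF
      refine ⟨C, fun u hu => le_trans ?_ (hC u hu)⟩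
      rw [← h u, norm_mul, Complex.norm_real]
      gcongr
      exact le_mul_of_one_le_left (norm_nonneg _) hu
    induction k with
    | zero =>
      obtain ⟨C, hC⟩ := exists_norm_iteratedDeriv_schwartz_le f p 0
      exact key 0 f ⟨C, fun u _ => by simpa using hC u⟩ fun u => (hfQ u).symm
    | succ k ih =>
      obtain ⟨C, hC⟩ := exists_norm_iteratedDeriv_schwartz_le f p (k + 1)
      obtain ⟨C', hC'⟩ := ih
      refine key (k + 1) (fun u => iteratedDeriv (k + 1) f u - (k + 1) * Q k u)
        ⟨C + (k + 1) * C', fun u hu => ?_⟩ fun u => by rw [hid k u]; ring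
      calc ‖u‖ ^ p * ‖iteratedDeriv (k + 1) f u - (k + 1) * Q k u‖
          ≤ ‖u‖ ^ p * (‖iteratedDeriv (k + 1) f u‖ + (k + 1) * ‖Q k u‖) := by
            gcongr
            refine (norm_sub_le _ _).trans_eq ?_
            rw [norm_mul]
            congr 2
            exact_mod_cast Complex.norm_natCast (k + 1)
        _ = ‖u‖ ^ p * ‖iteratedDeriv (k + 1) f u‖ + (k + 1) * (‖u‖ ^ p * ‖Q k u‖) := by ring
        _ ≤ C + (k + 1) * C' := by gcongr <;> [exact hC u; exact hC' u hu]
  refine ⟨⟨Q 0, hQs, fun p k => ?_⟩, hfQ, fun k => ?_⟩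
  · obtain ⟨C, hC⟩ := hdec p k
    have hcont : Continuous fun u : ℝ => ‖u‖ ^ p * ‖Q k u‖ := by
      have : Continuous (Q k) := continuous_iff_continuousAt.2 fun x => (hQd k x).continuousAt
      fun_prop
    obtain ⟨C', hC'⟩ := (isCompact_closedBall (0 : ℝ) 1).bddAbove_image hcont.continuousOn
    refine ⟨max C C', fun u => ?_⟩
    rw [norm_iteratedFDeriv_eq_norm_iteratedDeriv, hQi]
    rcases le_total 1 ‖u‖ with h | h
    · exact (hC u h).trans (le_max_left _ _)
    · exact (hC' ⟨u, by simpa using h, rfl⟩).trans (le_max_right _ _)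
  · change _ = _ * iteratedDeriv k (Q 0) 0
    rw [hid, hQi]
    simp

theorem iteratedDeriv_derivCLM (g : 𝓢(ℝ, ℂ)) (k : ℕ) :
    iteratedDeriv k (SchwartzMap.derivCLM ℂ ℂ g) = iteratedDeriv (k + 1) g := by
  rw [iteratedDeriv_succ']
  rfl

/-- `deltaOp` sends a Schwartz function with vanishing derivative at the origin to a function
which agrees with a Schwartz function away from the origin. -/
theorem exists_schwartz_eq_deltaOp (r : ℕ) (l : ℝ) (m : ℕ) (hm : 1 ≤ m) (g : 𝓢(ℝ, ℂ))
    (hg : InSn m g) :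
    ∃ h : 𝓢(ℝ, ℂ), (∀ u : ℝ, u ≠ 0 → h u = deltaOp r l g u) ∧ InSn (m - 1) h := by
  have hg0 : deriv g 0 = 0 := by simpa using hg 0 hm
  obtain ⟨q, hq, hqk⟩ := exists_schwartz_eq_mul (SchwartzMap.derivCLM ℂ ℂ g) hg0
  set gn : 𝓢(ℝ, ℂ) := SchwartzMap.compCLMOfContinuousLinearEquiv ℂ
    (ContinuousLinearEquiv.neg ℝ) g with hgn
  have hgn_apply (u : ℝ) : gn u = g (-u) := rfl
  have hfk (k : ℕ) : iteratedDeriv k (g - gn) 0 = (1 - (-1) ^ k) * iteratedDeriv k g 0 := by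
    have h1 : iteratedDeriv k (gn : ℝ → ℂ) 0 = (-1 : ℝ) ^ k • iteratedDeriv k g (-0) :=
      iteratedDeriv_comp_neg k g 0
    rw [show ((g - gn : 𝓢(ℝ, ℂ)) : ℝ → ℂ) = (g : ℝ → ℂ) - (gn : ℝ → ℂ) from rfl,
      iteratedDeriv_sub (g.smooth k).contDiffAt (gn.smooth k).contDiffAt, h1, Complex.real_smul]
    push_cast
    rw [neg_zero]
    ring
  obtain ⟨q1, hq1, hq1k⟩ := exists_schwartz_eq_mul (g - gn) (by simp [hgn_apply])
  obtain ⟨q2, hq2, hq2k⟩ := exists_schwartz_eq_mul q1 (by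
    have h := hq1k 0
    rw [hfk] at h
    simpa [hg0] using h.symm)
  set c1 : ℂ := ((2 * l + 1 : ℝ) : ℂ) with hc1
  set c2 : ℂ := ((l + 1 / 2 + 2 * r * (l + r + 1) : ℝ) : ℂ) with hc2
  refine ⟨SchwartzMap.derivCLM ℂ ℂ (SchwartzMap.derivCLM ℂ ℂ g) + c1 • q - c2 • q2,
    fun u hu => ?_, fun s hs => ?_⟩
  · have hu' : (u : ℂ) ≠ 0 := by exact_mod_cast hu
    have e1 : deriv g u = u * q u := hq u
    have e2 : g u - g (-u) = u * (u * q2 u) := by rw [← hq2, ← hq1]; rfl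
    have e3 : iteratedDeriv 2 g u = deriv (deriv g) u := by
      rw [iteratedDeriv_succ, iteratedDeriv_one]
    change deriv (deriv g) u + c1 * q u - c2 * q2 u = _
    rw [deltaOp, e1, e2, e3, Complex.ofReal_div, ← hc1, ← hc2]
    field_simp
  · have hs' : s + 1 < m := by omega
    have hgs : iteratedDeriv (2 * s + 3) g 0 = 0 := hg (s + 1) hs'
    have hqs : iteratedDeriv (2 * s + 1) q 0 = 0 := by
      have h := hqk (2 * s + 1)
      rw [iteratedDeriv_derivCLM, hgs] at h
      refine (mul_eq_zero.1 h.symm).resolve_left ?_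
      exact_mod_cast (2 * s + 1).succ_ne_zero
    have hq2s : iteratedDeriv (2 * s + 1) q2 0 = 0 := by
      have h := hq1k (2 * s + 2)
      rw [hfk, hgs, mul_zero, hq2k] at h
      refine (mul_eq_zero.1 ((mul_eq_zero.1 h.symm).resolve_left ?_)).resolve_left ?_
      · exact_mod_cast (2 * s + 1).succ_ne_zero
      · exact_mod_cast (2 * s + 2).succ_ne_zero
    set d := SchwartzMap.derivCLM ℂ ℂ (SchwartzMap.derivCLM ℂ ℂ g) with hd
    have hds : iteratedDeriv (2 * s + 1) d 0 = 0 := by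
      rw [hd, iteratedDeriv_derivCLM, iteratedDeriv_derivCLM]; exact hgs
    have hsmul (c : ℂ) (p : 𝓢(ℝ, ℂ)) (hp : iteratedDeriv (2 * s + 1) p 0 = 0) :
        iteratedDeriv (2 * s + 1) (c • p : 𝓢(ℝ, ℂ)) 0 = 0 := by
      change iteratedDeriv (2 * s + 1) (c • (p : ℝ → ℂ)) 0 = 0
      rw [iteratedDeriv_const_smul_field, hp, smul_zero]
    rw [show ((d + c1 • q - c2 • q2 : 𝓢(ℝ, ℂ)) : ℝ → ℂ) =
        ((d + c1 • q : 𝓢(ℝ, ℂ)) : ℝ → ℂ) - ((c2 • q2 : 𝓢(ℝ, ℂ)) : ℝ → ℂ) from rfl,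
      iteratedDeriv_sub (SchwartzMap.smooth _ _).contDiffAt (SchwartzMap.smooth _ _).contDiffAt,
      show ((d + c1 • q : 𝓢(ℝ, ℂ)) : ℝ → ℂ) =
        (d : ℝ → ℂ) + ((c1 • q : 𝓢(ℝ, ℂ)) : ℝ → ℂ) from rfl,
      iteratedDeriv_add (d.smooth _).contDiffAt (SchwartzMap.smooth _ _).contDiffAt,
      hds, hsmul c1 q hqs, hsmul c2 q2 hq2s]
    simp

theorem deltaOp_congr (r : ℕ) (l : ℝ) {F G : ℝ → ℂ} (h : ∀ u : ℝ, u ≠ 0 → F u = G u) {u : ℝ}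
    (hu : u ≠ 0) : deltaOp r l F u = deltaOp r l G u := by
  have he : F =ᶠ[nhds u] G := by
    filter_upwards [isOpen_ne.mem_nhds hu] with x hx using h x hx
  rw [deltaOp, deltaOp, he.iteratedDeriv_eq, he.deriv_eq, h u hu, h (-u) (neg_ne_zero.2 hu)]

theorem Ftrans_congr (r : ℕ) (l : ℝ) {F G : ℝ → ℂ} (h : ∀ u : ℝ, u ≠ 0 → F u = G u) (v : ℝ) :
    Ftrans r l F v = Ftrans r l G v := by
  rw [Ftrans, Ftrans]
  congr 1
  refine integral_congr_ae ?_
  filter_upwards [compl_mem_ae_iff.2 (measure_singleton (0 : ℝ))] with u hu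
  simp only [h u hu]

/-! ### Normalized Bessel functions -/

theorem abs_mul_pow_div_factorial_le {b : ℕ → ℝ} {M : ℝ} (hb : ∀ k, |b k| ≤ M ^ k) {R x : ℝ}
    (hx : |x| ≤ R) (k : ℕ) :
    ‖b k * (x ^ k / k.factorial)‖ ≤ (M * R) ^ k / k.factorial := by
  rw [norm_mul, norm_div, norm_pow, Real.norm_eq_abs, Real.norm_eq_abs, RCLike.norm_natCast,
    mul_pow, mul_div_assoc]
  gcongr
  exacts [(abs_nonneg _).trans (hb k), hb k]

theorem summable_egf {b : ℕ → ℝ} {M : ℝ} (hb : ∀ k, |b k| ≤ M ^ k) (x : ℝ) :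
    Summable fun k => b k * (x ^ k / k.factorial) :=
  .of_norm_bounded (Real.summable_pow_div_factorial (M * |x|))
    fun k => abs_mul_pow_div_factorial_le hb le_rfl k

/-- An exponential generating series may be differentiated termwise. -/
theorem hasDerivAt_egf {b : ℕ → ℝ} {M : ℝ} (hM : 0 ≤ M) (hb : ∀ k, |b k| ≤ M ^ k) (x : ℝ) :
    HasDerivAt (fun y => ∑' k, b k * (y ^ k / k.factorial))
      (∑' k, b (k + 1) * (x ^ k / k.factorial)) x := by
  have hs : Summable fun k : ℕ => (M * (|x| + 1)) ^ k / (k.factorial : ℝ) :=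
    Real.summable_pow_div_factorial _
  have hterm (k : ℕ) (y : ℝ) : HasDerivAt
      (fun z : ℝ => b (k + 1) * (z ^ (k + 1) / (k + 1).factorial))
      (b (k + 1) * (y ^ k / k.factorial)) y := by
    have h := ((hasDerivAt_pow (k + 1) y).div_const ((k + 1).factorial : ℝ)).const_mul (b (k + 1))
    convert! h using 1
    rw [Nat.factorial_succ]
    push_cast
    have := Nat.factorial_ne_zero k
    field_simp
  have hmain := hasDerivAt_tsum_of_isPreconnected
    (g := fun (k : ℕ) (z : ℝ) => b (k + 1) * (z ^ (k + 1) / (k + 1).factorial))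
    (g' := fun (k : ℕ) (z : ℝ) => b (k + 1) * (z ^ k / k.factorial))
    (t := Metric.ball 0 (|x| + 1)) (hs.mul_left M) Metric.isOpen_ball
    (convex_ball _ _).isPreconnected (fun k y _ => hterm k y)
    (fun k y hy => ?_) (y₀ := 0) (by simp; positivity)
    ((summable_nat_add_iff 1).2 (summable_egf hb 0)) (y := x) (by simp)
  · refine (hmain.const_add (b 0)).congr_of_eventuallyEq (.of_forall fun y => ?_)
    simpa using (summable_egf hb y).tsum_eq_zero_add
  · have hy' : |y| ≤ |x| + 1 := by simpa using (Metric.mem_ball.1 hy).le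
    rw [norm_mul, norm_div, norm_pow, Real.norm_eq_abs, Real.norm_eq_abs, RCLike.norm_natCast,
      mul_pow, ← mul_div_assoc, ← mul_div_assoc, ← mul_assoc]
    gcongr
    exact (hb (k + 1)).trans_eq (pow_succ' M k)

/-- The coefficients of the normalized Bessel function as an exponential generating series
in `v ^ 2 / 4`. -/
noncomputable def besselCoeff (l : ℝ) (k : ℕ) : ℝ :=
  (-1) ^ k * Real.Gamma (l + 1) / Real.Gamma (k + l + 1)

theorem besselCoeff_succ {l : ℝ} (hl : -(1 / 2 : ℝ) < l) (k : ℕ) :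
    (k + l + 1) * besselCoeff l (k + 1) = -besselCoeff l k := by
  have hk : (0 : ℝ) ≤ k := k.cast_nonneg
  have h0 : (k : ℝ) + l + 1 ≠ 0 := by linarith
  have h1 : Real.Gamma (k + l + 1) ≠ 0 := (Real.Gamma_pos_of_pos (by linarith)).ne'
  have h2 : Real.Gamma (((k + 1 : ℕ) : ℝ) + l + 1) = (k + l + 1) * Real.Gamma (k + l + 1) := by
    rw [← Real.Gamma_add_one h0]
    congr 1
    push_cast
    ring
  rw [besselCoeff, besselCoeff, h2]
  field_simp
  ring

theorem besselCoeff_zero {l : ℝ} (hl : -(1 / 2 : ℝ) < l) : besselCoeff l 0 = 1 := by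
  have : Real.Gamma (l + 1) ≠ 0 := (Real.Gamma_pos_of_pos (by linarith)).ne'
  simp [besselCoeff, this]

theorem abs_besselCoeff_le {l : ℝ} (hl : -(1 / 2 : ℝ) < l) (k : ℕ) :
    |besselCoeff l k| ≤ 2 ^ k := by
  induction k with
  | zero => simp [besselCoeff_zero hl]
  | succ k ih =>
    have hk : (0 : ℝ) ≤ k := k.cast_nonneg
    have h := congrArg abs (besselCoeff_succ hl k)
    rw [abs_mul, abs_neg, abs_of_pos (by linarith : (0 : ℝ) < k + l + 1)] at h
    rw [pow_succ]
    nlinarith [abs_nonneg (besselCoeff l (k + 1))]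

theorem nbessel_eq_tsum (l v : ℝ) :
    nbessel l v = ∑' k : ℕ, besselCoeff l k * ((v ^ 2 / 4) ^ k / k.factorial) := by
  rw [nbessel, ← tsum_mul_left]
  refine tsum_congr fun k => ?_
  rw [besselCoeff, pow_mul, show (v / 2) ^ 2 = v ^ 2 / 4 by ring]
  simp only [div_eq_mul_inv, mul_inv]
  ring

theorem nbessel_neg (l v : ℝ) : nbessel l (-v) = nbessel l v := by
  simp only [nbessel_eq_tsum, neg_sq]

/-- The normalized Bessel function is an even solution of the Bessel equation. -/
theorem exists_nbessel_ode {l : ℝ} (hl : -(1 / 2 : ℝ) < l) :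
    ∃ j1 j2 : ℝ → ℝ, (∀ v, HasDerivAt (nbessel l) (j1 v) v) ∧ (∀ v, HasDerivAt j1 (j2 v) v) ∧
      ∀ v, v * j2 v + (2 * l + 1) * j1 v + v * nbessel l v = 0 := by
  have hb0 := abs_besselCoeff_le hl
  have hbnd (k : ℕ) : |besselCoeff l (k + 1) / 2| ≤ 4 ^ k := by
    rw [abs_div, abs_two]
    have := hb0 (k + 1)
    rw [pow_succ] at this
    have h2 : (2 : ℝ) ^ k ≤ 4 ^ k := by gcongr; norm_num
    linarith
  have hbnd2 (k : ℕ) : |besselCoeff l (k + 2) / 4| ≤ 4 ^ k := by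
    rw [abs_div, abs_of_pos (by norm_num : (0 : ℝ) < 4)]
    have := hb0 (k + 2)
    rw [pow_add] at this
    have h2 : (2 : ℝ) ^ k ≤ 4 ^ k := by gcongr; norm_num
    linarith
  set P : ℝ → ℝ := fun x => ∑' k : ℕ, besselCoeff l k * (x ^ k / k.factorial) with hP
  set P1 : ℝ → ℝ := fun x => ∑' k : ℕ, besselCoeff l (k + 1) * (x ^ k / k.factorial) with hP1
  set P2 : ℝ → ℝ := fun x => ∑' k : ℕ, besselCoeff l (k + 2) * (x ^ k / k.factorial) with hP2
  have dP (x : ℝ) : HasDerivAt P (P1 x) x := hasDerivAt_egf (by norm_num) hb0 x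
  have dP1 (x : ℝ) : HasDerivAt P1 (P2 x) x := by
    have h := (hasDerivAt_egf (by norm_num) hbnd x).const_mul 2
    convert! h using 1
    · funext y; rw [← tsum_mul_left]; exact tsum_congr fun k => by ring
    · rw [← tsum_mul_left]; exact tsum_congr fun k => by ring
  have s0 (x : ℝ) := summable_egf hb0 x
  have s1 (x : ℝ) : Summable fun k : ℕ => besselCoeff l (k + 1) * (x ^ k / k.factorial) :=
    ((summable_egf hbnd x).mul_left 2).congr fun k => by ring
  have s2 (x : ℝ) : Summable fun k : ℕ => besselCoeff l (k + 2) * (x ^ k / k.factorial) :=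
    ((summable_egf hbnd2 x).mul_left 4).congr fun k => by ring
  have hode (x : ℝ) : x * P2 x + (l + 1) * P1 x + P x = 0 := by
    have e2 : x * P2 x = ∑' k : ℕ, k * besselCoeff l (k + 1) * (x ^ k / k.factorial) := by
      have hterm (k : ℕ) : ((k + 1 : ℕ) : ℝ) * besselCoeff l (k + 1 + 1) *
          (x ^ (k + 1) / (k + 1).factorial) =
          x * (besselCoeff l (k + 2) * (x ^ k / k.factorial)) := by
        rw [Nat.factorial_succ]
        push_cast
        have := Nat.factorial_ne_zero k
        field_simp
        ring
      have hsum : Summable fun k : ℕ =>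
          (k : ℝ) * besselCoeff l (k + 1) * (x ^ k / k.factorial) :=
        (summable_nat_add_iff 1).1 (((s2 x).mul_left x).congr fun k => (hterm k).symm)
      rw [hsum.tsum_eq_zero_add, ← tsum_mul_left]
      simp only [hterm]
      simp
    have e1 : x * P2 x = ∑' k : ℕ, -((l + 1) * (besselCoeff l (k + 1) * (x ^ k / k.factorial)) +
        besselCoeff l k * (x ^ k / k.factorial)) := by
      rw [e2]
      refine tsum_congr fun k => ?_
      linear_combination (x ^ k / k.factorial) * besselCoeff_succ hl k
    rw [e1, tsum_neg, ((s1 x).mul_left (l + 1)).tsum_add (s0 x), tsum_mul_left]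
    ring
  have hj : nbessel l = fun v => P (v ^ 2 / 4) := funext fun v => nbessel_eq_tsum l v
  have dsq (v : ℝ) : HasDerivAt (fun v : ℝ => v ^ 2 / 4) (v / 2) v := by
    convert! (hasDerivAt_pow 2 v).div_const 4 using 1
    norm_num; ring
  refine ⟨fun v => P1 (v ^ 2 / 4) * (v / 2),
    fun v => P2 (v ^ 2 / 4) * (v / 2) * (v / 2) + P1 (v ^ 2 / 4) * (1 / 2), fun v => ?_,
    fun v => ?_, fun v => ?_⟩
  · rw [hj]
    exact (dP _).comp v (dsq v)
  · exact ((dP1 _).comp v (dsq v)).mul ((hasDerivAt_id v).div_const 2)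
  · rw [hj]
    linear_combination v * hode (v ^ 2 / 4)

/-- The normalized Bessel function and its derivative are bounded by one. -/
theorem nbessel_sq_add_sq_le_one {l : ℝ} (hl : -(1 / 2 : ℝ) < l) {j1 j2 : ℝ → ℝ}
    (h1 : ∀ v, HasDerivAt (nbessel l) (j1 v) v) (h2 : ∀ v, HasDerivAt j1 (j2 v) v)
    (hode : ∀ v, v * j2 v + (2 * l + 1) * j1 v + v * nbessel l v = 0) (v : ℝ) :
    nbessel l v ^ 2 + j1 v ^ 2 ≤ 1 := by
  have hj0 : nbessel l 0 = 1 := by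
    rw [nbessel_eq_tsum, tsum_eq_single 0 fun k hk => by simp [hk]]
    simp [besselCoeff_zero hl]
  have hj10 : j1 0 = 0 := by
    have h := hode 0
    simp only [zero_mul, zero_add, add_zero] at h
    exact (mul_eq_zero.1 h).resolve_left (by linarith)
  have hj1neg (u : ℝ) : j1 (-u) = -j1 u := by
    have h := (h1 (-u)).scomp u (hasDerivAt_neg u)
    have h' : HasDerivAt (nbessel l) ((-1 : ℝ) • j1 (-u)) u :=
      h.congr_of_eventuallyEq (.of_forall fun x => (nbessel_neg l x).symm)
    have := h'.unique (h1 u)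
    simp at this
    linarith
  have hE (u : ℝ) : HasDerivAt (fun u => nbessel l u ^ 2 + j1 u ^ 2)
      (2 * nbessel l u * j1 u + 2 * j1 u * j2 u) u := by
    convert! ((h1 u).pow 2).add ((h2 u).pow 2) using 1
    simp
  have hanti : AntitoneOn (fun u => nbessel l u ^ 2 + j1 u ^ 2) (Set.Ici 0) := by
    refine antitoneOn_of_hasDerivWithinAt_nonpos (convex_Ici 0)
      (fun u _ => (hE u).continuousAt.continuousWithinAt)
      (fun u _ => (hE u).hasDerivWithinAt) fun u hu => ?_
    rw [interior_Ici, Set.mem_Ioi] at hu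
    have h : u * (2 * nbessel l u * j1 u + 2 * j1 u * j2 u) = -(2 * (2 * l + 1) * j1 u ^ 2) := by
      linear_combination 2 * j1 u * hode u
    have h' : 0 ≤ 2 * (2 * l + 1) * j1 u ^ 2 := by
      have : 0 < 2 * l + 1 := by linarith
      positivity
    by_contra! hc
    nlinarith [mul_pos hu hc]
  have hpos (u : ℝ) (hu : 0 ≤ u) : nbessel l u ^ 2 + j1 u ^ 2 ≤ 1 := by
    simpa [hj0, hj10] using hanti (Set.mem_Ici.2 le_rfl) (Set.mem_Ici.2 hu) hu
  rcases le_total 0 v with h | h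
  · exact hpos v h
  · simpa [nbessel_neg, hj1neg] using hpos (-v) (by linarith)

/-! ### The kernel -/

theorem exists_e2r1_ode (r : ℕ) {l : ℝ} (hl : -(1 / 2 : ℝ) < l) :
    ∃ e1 e2 : ℝ → ℂ, (∀ v, HasDerivAt (e2r1 r l) (e1 v) v) ∧ (∀ v, HasDerivAt e1 (e2 v) v) ∧
      (∀ v : ℝ, (v : ℂ) ^ 2 * e2 v + ((2 * l + 1 : ℝ) : ℂ) * v * e1 v -
        ((l + 1 / 2 + 2 * r * (l + r + 1) : ℝ) : ℂ) * (e2r1 r l v - e2r1 r l (-v)) =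
          -(v : ℂ) ^ 2 * e2r1 r l v) ∧
      ∃ (C : ℝ) (N : ℕ), ∀ v, ‖e2r1 r l v‖ ≤ C * (1 + |v|) ^ N ∧ ‖e1 v‖ ≤ C * (1 + |v|) ^ N := by
  have hr : (0 : ℝ) ≤ r := r.cast_nonneg
  have hl' : -(1 / 2 : ℝ) < l + (2 * r + 1) := by linarith
  obtain ⟨j1, j2, hj1, hj2, hj⟩ := exists_nbessel_ode hl
  obtain ⟨w1, w2, hw1, hw2, hw⟩ := exists_nbessel_ode hl'
  have bj := nbessel_sq_add_sq_le_one hl hj1 hj2 hj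
  have bw := nbessel_sq_add_sq_le_one hl' hw1 hw2 hw
  set j := nbessel l with hjdef
  set w := nbessel (l + (2 * r + 1)) with hwdef
  set K : ℂ := Complex.I * (-1 : ℂ) ^ (r + 1) *
    (((2 ^ (2 * r + 1) * poch (l + 1) (2 * r + 1))⁻¹ : ℝ) : ℂ) with hK
  set c : ℝ := l + 1 / 2 + 2 * r * (l + r + 1) with hc
  have he (v : ℝ) : e2r1 r l v = (j v : ℂ) + K * ((v ^ (2 * r + 1) * w v : ℝ) : ℂ) := by
    rw [e2r1, hK, div_eq_mul_inv]
    push_cast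
    ring
  have hpow (v : ℝ) : v * (2 * r * v ^ (2 * r - 1)) = 2 * r * v ^ (2 * r) := by
    rcases r with _ | r
    · simp
    · rw [show 2 * (r + 1) = 2 * (r + 1) - 1 + 1 by omega, pow_succ, Nat.add_sub_cancel]
      ring
  set o1 : ℝ → ℝ := fun v => (2 * r + 1) * v ^ (2 * r) * w v + v ^ (2 * r + 1) * w1 v with ho1
  set o2 : ℝ → ℝ := fun v => ((2 * r + 1) * (2 * r * v ^ (2 * r - 1)) * w v +
    (2 * r + 1) * v ^ (2 * r) * w1 v) + ((2 * r + 1) * v ^ (2 * r) * w1 v +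
      v ^ (2 * r + 1) * w2 v) with ho2
  have dpow (v : ℝ) : HasDerivAt (fun v : ℝ => v ^ (2 * r + 1)) ((2 * r + 1) * v ^ (2 * r)) v := by
    simpa using hasDerivAt_pow (2 * r + 1) v
  have dpow' (v : ℝ) : HasDerivAt (fun v : ℝ => (2 * r + 1) * v ^ (2 * r))
      ((2 * r + 1) * (2 * r * v ^ (2 * r - 1))) v := by
    simpa using (hasDerivAt_pow (2 * r) v).const_mul (2 * (r : ℝ) + 1)
  have do0 (v : ℝ) : HasDerivAt (fun v => v ^ (2 * r + 1) * w v) (o1 v) v :=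
    (dpow v).mul (hw1 v)
  have do1 (v : ℝ) : HasDerivAt o1 (o2 v) v :=
    ((dpow' v).mul (hw1 v)).add ((dpow v).mul (hw2 v))
  refine ⟨fun v => (j1 v : ℂ) + K * (o1 v : ℂ), fun v => (j2 v : ℂ) + K * (o2 v : ℂ),
    fun v => ?_, fun v => ?_, fun v => ?_, 1 + ‖K‖ * (2 * r + 2), 2 * r + 1, fun v => ?_⟩
  · exact ((hj1 v).ofReal_comp.add ((do0 v).ofReal_comp.const_mul K)).congr_of_eventuallyEq
      (.of_forall he)
  · exact (hj2 v).ofReal_comp.add ((do1 v).ofReal_comp.const_mul K)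
  · have hE : v ^ 2 * j2 v + (2 * l + 1) * v * j1 v = -v ^ 2 * j v := by
      linear_combination v * hj v
    have hO : v ^ 2 * o2 v + (2 * l + 1) * v * o1 v - 2 * c * (v ^ (2 * r + 1) * w v) =
        -v ^ 2 * (v ^ (2 * r + 1) * w v) := by
      rw [ho1, ho2, hc]
      linear_combination (v ^ 2 * v ^ (2 * r)) * hw v + (2 * r + 1) * v * w v * hpow v
    have hneg : e2r1 r l (-v) = (j v : ℂ) - K * ((v ^ (2 * r + 1) * w v : ℝ) : ℂ) := by
      rw [he, hjdef, hwdef, nbessel_neg, nbessel_neg, (odd_two_mul_add_one r).neg_pow]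
      push_cast
      ring
    have hE' := congrArg (fun x : ℝ => (x : ℂ)) hE
    have hO' := congrArg (fun x : ℝ => (x : ℂ)) hO
    rw [hneg, he]
    set o := v ^ (2 * r + 1) * w v
    push_cast at hE' hO' ⊢
    linear_combination hE' + K * hO'
  · have abs_le_one {x y : ℝ} (h : x ^ 2 + y ^ 2 ≤ 1) : |x| ≤ 1 ∧ |y| ≤ 1 :=
      ⟨abs_le_one_iff_mul_self_le_one.2 (by nlinarith),
        abs_le_one_iff_mul_self_le_one.2 (by nlinarith)⟩
    obtain ⟨a1, a2⟩ := abs_le_one (bj v)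
    obtain ⟨a3, a4⟩ := abs_le_one (bw v)
    set T : ℝ := (1 + |v|) ^ (2 * r + 1) with hT
    have hT1 : 1 ≤ T := one_le_pow₀ (by linarith [abs_nonneg v])
    have hp1 : |v| ^ (2 * r + 1) ≤ T := by rw [hT]; gcongr; linarith
    have hp2 : |v| ^ (2 * r) ≤ T := by
      calc |v| ^ (2 * r) ≤ (1 + |v|) ^ (2 * r) := by gcongr; linarith
        _ ≤ T := pow_le_pow_right₀ (by linarith [abs_nonneg v]) (by omega)
    have b0 : |v ^ (2 * r + 1) * w v| ≤ T := by
      rw [abs_mul, abs_pow]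
      exact (mul_le_of_le_one_right (by positivity) a3).trans hp1
    have b1 : |o1 v| ≤ (2 * r + 2) * T := by
      calc |o1 v| ≤ |(2 * r + 1) * v ^ (2 * r) * w v| + |v ^ (2 * r + 1) * w1 v| := abs_add_le _ _
        _ = (2 * r + 1) * |v| ^ (2 * r) * |w v| + |v| ^ (2 * r + 1) * |w1 v| := by
          rw [abs_mul, abs_mul, abs_mul, abs_pow, abs_pow,
            abs_of_nonneg (by positivity : (0 : ℝ) ≤ 2 * r + 1)]
        _ ≤ (2 * r + 1) * T * 1 + T * 1 := by gcongr
        _ = (2 * r + 2) * T := by ring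
    have hKT : 0 ≤ ‖K‖ * T := by positivity
    constructor
    · rw [he]
      calc _ ≤ ‖(j v : ℂ)‖ + ‖K‖ * ‖((v ^ (2 * r + 1) * w v : ℝ) : ℂ)‖ := by
            rw [← norm_mul]; exact norm_add_le _ _
        _ ≤ T + ‖K‖ * T := by
            rw [Complex.norm_real, Complex.norm_real, Real.norm_eq_abs, Real.norm_eq_abs]
            gcongr
            exact a1.trans hT1
        _ ≤ _ := by nlinarith
    · calc _ ≤ ‖(j1 v : ℂ)‖ + ‖K‖ * ‖(o1 v : ℂ)‖ := by
            rw [← norm_mul]; exact norm_add_le _ _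
        _ ≤ T + ‖K‖ * ((2 * r + 2) * T) := by
            rw [Complex.norm_real, Complex.norm_real, Real.norm_eq_abs, Real.norm_eq_abs]
            gcongr
            exact a2.trans hT1
        _ = _ := by ring

/-! ### Integration by parts -/

theorem exists_norm_mul_schwartz_le (h : 𝓢(ℝ, ℂ)) {φ : ℝ → ℂ} {C : ℝ} {N : ℕ}
    (hφ : ∀ u, ‖φ u‖ ≤ C * (1 + |u|) ^ N) :
    ∃ D : ℝ, ∀ u, ‖φ u * h u‖ ≤ D * (1 + ‖u‖) ^ (-2 : ℝ) := by
  have hC : 0 ≤ C := by simpa using (norm_nonneg _).trans (hφ 0)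
  set S := 2 ^ (N + 2) * ((Finset.Iic (N + 2, 0)).sup
    fun m : ℕ × ℕ => SchwartzMap.seminorm ℂ m.1 m.2) h with hS
  have hs (u : ℝ) : (1 + ‖u‖) ^ (N + 2) * ‖h u‖ ≤ S := by
    simpa using SchwartzMap.one_add_le_sup_seminorm_apply (𝕜 := ℂ) (m := (N + 2, 0))
      (k := N + 2) (n := 0) le_rfl le_rfl h u
  refine ⟨C * S, fun u => ?_⟩
  have hu : 0 < 1 + ‖u‖ := by positivity
  rw [show (-2 : ℝ) = -((2 : ℕ) : ℝ) by norm_num, Real.rpow_neg hu.le, Real.rpow_natCast,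
    ← div_eq_mul_inv, le_div_iff₀ (by positivity), norm_mul]
  calc ‖φ u‖ * ‖h u‖ * (1 + ‖u‖) ^ 2 ≤ C * (1 + ‖u‖) ^ N * ‖h u‖ * (1 + ‖u‖) ^ 2 := by
        gcongr
        exact hφ u
    _ = C * ((1 + ‖u‖) ^ (N + 2) * ‖h u‖) := by ring
    _ ≤ C * S := by gcongr; exact hs u

theorem integrable_mul_schwartz (h : 𝓢(ℝ, ℂ)) {φ : ℝ → ℂ} (hc : Continuous φ) {C : ℝ} {N : ℕ}
    (hφ : ∀ u, ‖φ u‖ ≤ C * (1 + |u|) ^ N) : Integrable fun u => φ u * h u := by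
  obtain ⟨D, hD⟩ := exists_norm_mul_schwartz_le h hφ
  exact ((integrable_one_add_norm (by simp)).const_mul D).mono'
    (hc.mul h.continuous).aestronglyMeasurable (.of_forall hD)

theorem norm_mul_abs_rpow_le {p : ℝ} (hp : 0 ≤ p) {φ : ℝ → ℂ} {C : ℝ} {N : ℕ}
    (hφ : ∀ u, ‖φ u‖ ≤ C * (1 + |u|) ^ N) (u : ℝ) :
    ‖φ u * ((|u| ^ p : ℝ) : ℂ)‖ ≤ C * (1 + |u|) ^ (N + ⌈p⌉₊) := by
  have hw : |u| ^ p ≤ (1 + |u|) ^ ⌈p⌉₊ := by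
    calc |u| ^ p ≤ (1 + |u|) ^ p := by gcongr; linarith
      _ ≤ (1 + |u|) ^ (⌈p⌉₊ : ℝ) :=
        Real.rpow_le_rpow_of_exponent_le (by linarith [abs_nonneg u]) (Nat.le_ceil p)
      _ = _ := Real.rpow_natCast _ _
  rw [norm_mul, Complex.norm_real, Real.norm_of_nonneg (by positivity), pow_add, ← mul_assoc]
  exact mul_le_mul (hφ u) hw (by positivity) ((norm_nonneg _).trans (hφ u))

theorem integral_mul_weight_eq {p : ℝ} (hp : 0 < p) {c μ : ℂ} {E E1 E2 : ℝ → ℂ}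
    (hE : ∀ u, HasDerivAt E (E1 u) u) (hE1 : ∀ u, HasDerivAt E1 (E2 u) u)
    (hode : ∀ u : ℝ, (u : ℂ) ^ 2 * E2 u + p * u * E1 u - c * (E u - E (-u)) = μ * u ^ 2 * E u)
    {C : ℝ} {N : ℕ} (hbE : ∀ u, ‖E u‖ ≤ C * (1 + |u|) ^ N)
    (hbE1 : ∀ u, ‖E1 u‖ ≤ C * (1 + |u|) ^ N) (g h : 𝓢(ℝ, ℂ))
    (hgh : ∀ u : ℝ, u ≠ 0 → (u : ℂ) ^ 2 * h u =
      u ^ 2 * iteratedDeriv 2 g u + p * u * deriv g u - c * (g u - g (-u))) :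
    ∫ u : ℝ, E u * h u * ((|u| ^ p : ℝ) : ℂ) = μ * ∫ u : ℝ, E u * g u * ((|u| ^ p : ℝ) : ℂ) := by
  set w : ℝ → ℂ := fun u => ((|u| ^ p : ℝ) : ℂ) with hw
  have hwc : Continuous w :=
    Complex.continuous_ofReal.comp (continuous_abs.rpow_const fun _ => Or.inr hp.le)
  have hEc : Continuous E := continuous_iff_continuousAt.2 fun u => (hE u).continuousAt
  have hEint (f : 𝓢(ℝ, ℂ)) : Integrable fun u => E u * f u * w u :=
    (integrable_mul_schwartz f (hEc.mul hwc) (norm_mul_abs_rpow_le hp.le hbE)).congr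
      (.of_forall fun u => mul_right_comm _ _ _)
  set A : ℝ → ℂ := fun u => E u * h u * w u - μ * (E u * g u * w u) with hA
  have hAint : Integrable A := (hEint h).sub ((hEint g).const_mul μ)
  rw [← sub_eq_zero, ← integral_const_mul, ← integral_sub (hEint h) ((hEint g).const_mul μ)]
  change ∫ u, A u = 0
  set dg : 𝓢(ℝ, ℂ) := SchwartzMap.derivCLM ℂ ℂ g with hdg
  have hg1 (u : ℝ) : HasDerivAt g (dg u) u := g.hasDerivAt u
  have hg2 (u : ℝ) : HasDerivAt dg (iteratedDeriv 2 g u) u := by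
    have h := dg.hasDerivAt u
    rwa [← iteratedDeriv_one, hdg, iteratedDeriv_derivCLM] at h
  set B : ℝ → ℂ := fun u => dg u * E u - g u * E1 u with hB
  have hBd (u : ℝ) : HasDerivAt B (iteratedDeriv 2 g u * E u - g u * E2 u) u := by
    convert! ((hg2 u).mul (hE u)).sub ((hg1 u).mul (hE1 u)) using 1
    ring
  have hBc : Continuous B := continuous_iff_continuousAt.2 fun u => (hBd u).continuousAt
  set V : ℝ → ℂ := fun u => w u * (B u - B (-u)) with hV
  have hVc : Continuous V := by fun_prop
  have hV0 : V 0 = 0 := by simp [hV]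
  have hVlim : Filter.Tendsto V Filter.atTop (nhds 0) := by
    obtain ⟨D1, hD1⟩ := exists_norm_mul_schwartz_le dg (norm_mul_abs_rpow_le hp.le hbE)
    obtain ⟨D2, hD2⟩ := exists_norm_mul_schwartz_le g (norm_mul_abs_rpow_le hp.le hbE1)
    have hwB (u : ℝ) : ‖w u * B u‖ ≤ (D1 + D2) * (1 + ‖u‖) ^ (-2 : ℝ) := by
      rw [show w u * B u = E u * w u * dg u - E1 u * w u * g u by rw [hB]; ring, add_mul]
      exact (norm_sub_le _ _).trans (add_le_add (hD1 u) (hD2 u))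
    have hbound (u : ℝ) : ‖V u‖ ≤ 2 * (D1 + D2) * (1 + ‖u‖) ^ (-2 : ℝ) := by
      have e : V u = w u * B u - w (-u) * B (-u) := by simp only [hV, hw, abs_neg]; ring
      have h1 := hwB u
      have h2 := hwB (-u)
      rw [norm_neg] at h2
      rw [e]
      linarith [norm_sub_le (w u * B u) (w (-u) * B (-u))]
    refine squeeze_zero_norm hbound ?_
    rw [← mul_zero (2 * (D1 + D2))]
    refine Filter.Tendsto.const_mul _ ((tendsto_rpow_neg_atTop two_pos).comp ?_)
    exact Filter.tendsto_atTop_add_const_left _ _ (by simpa using! Filter.tendsto_abs_atTop_atTop)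
  have hVd (u : ℝ) (hu : u ∈ Set.Ioi (0 : ℝ)) : HasDerivAt V (A u + A (-u)) u := by
    have hu0 : 0 < u := hu
    have huc : (u : ℂ) ≠ 0 := by exact_mod_cast hu0.ne'
    have hwu : w u = u * ((u ^ (p - 1) : ℝ) : ℂ) := by
      change ((|u| ^ p : ℝ) : ℂ) = _
      rw [← Complex.ofReal_mul, abs_of_pos hu0, Real.rpow_sub_one hu0.ne',
        mul_div_cancel₀ _ hu0.ne']
    have hwn : w (-u) = w u := by simp only [hw, abs_neg]
    have hwd : HasDerivAt w (p * ((u ^ (p - 1) : ℝ) : ℂ)) u := by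
      have h1 : HasDerivAt (fun x : ℝ => x ^ p) (p * u ^ (p - 1)) u :=
        Real.hasDerivAt_rpow_const (Or.inl hu0.ne')
      have h2 := h1.ofReal_comp
      rw [Complex.ofReal_mul] at h2
      refine h2.congr_of_eventuallyEq ?_
      filter_upwards [isOpen_Ioi.mem_nhds hu0] with x hx
      simp only [hw, abs_of_pos (Set.mem_Ioi.1 hx)]
    have hBn := (hBd (-u)).scomp u (hasDerivAt_neg u)
    convert! hwd.mul ((hBd u).sub hBn) using 1
    have k1 := hode u
    have k2 := hode (-u)
    have k3 := hgh u hu0.ne'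
    have k4 := hgh (-u) (neg_ne_zero.2 hu0.ne')
    rw [neg_neg] at k2 k4
    push_cast at k2 k4
    have d1 (x : ℝ) : deriv g x = dg x := rfl
    rw [d1] at k3 k4
    simp only [hA, hB, hwn, hwu, Pi.sub_apply, Function.comp_apply, neg_smul,
      one_smul]
    set s : ℂ := ((u ^ (p - 1) : ℝ) : ℂ)
    refine mul_left_cancel₀ huc ?_
    linear_combination s * (E u * k3 + E (-u) * k4 + g u * k1 + g (-u) * k2)
  have hI : ∫ u in Set.Ioi (0 : ℝ), (A u + A (-u)) = 0 - V 0 :=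
    integral_Ioi_of_hasDerivAt_of_tendsto hVc.continuousWithinAt hVd
      (hAint.add hAint.comp_neg).integrableOn hVlim
  rw [hV0, sub_zero, integral_add hAint.integrableOn hAint.comp_neg.integrableOn,
    integral_comp_neg_Ioi, neg_zero, add_comm] at hI
  rw [← hI]
  exact (intervalIntegral.integral_Iic_add_Ioi hAint.integrableOn hAint.integrableOn).symm

theorem Ftrans_eq_of_eq_deltaOp (r : ℕ) {l : ℝ} (hl : -(1 / 2 : ℝ) < l) (g h : 𝓢(ℝ, ℂ))
    (hgh : ∀ u : ℝ, u ≠ 0 → h u = deltaOp r l g u) (v : ℝ) :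
    Ftrans r l h v = -(v : ℂ) ^ 2 * Ftrans r l g v := by
  obtain ⟨e1, e2, he, he1, hode, C, N, hb⟩ := exists_e2r1_ode r hl
  have hC : 0 ≤ C := by simpa using (norm_nonneg _).trans (hb 0).1
  have hgrow (u : ℝ) : C * (1 + |u * v|) ^ N ≤ C * (1 + |v|) ^ N * (1 + |u|) ^ N := by
    rw [mul_assoc, ← mul_pow, abs_mul]
    gcongr
    nlinarith [abs_nonneg u, abs_nonneg v]
  have hv : (1 : ℝ) ≤ 1 + |v| := by linarith [abs_nonneg v]
  have key := integral_mul_weight_eq (p := 2 * l + 1) (by linarith)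
    (c := ((l + 1 / 2 + 2 * r * (l + r + 1) : ℝ) : ℂ)) (μ := -(v : ℂ) ^ 2)
    (E := fun u => e2r1 r l (u * v)) (E1 := fun u => v * e1 (u * v))
    (E2 := fun u => v * (v * e2 (u * v)))
    (fun u => by simpa using! (he (u * v)).scomp u ((hasDerivAt_id u).mul_const v))
    (fun u => by
      simpa using! ((he1 (u * v)).scomp u ((hasDerivAt_id u).mul_const v)).const_mul (v : ℂ))
    (fun u => by
      have h := hode (u * v)
      rw [neg_mul u v] at *
      push_cast at h ⊢
      linear_combination h)
    (C := (1 + |v|) * (C * (1 + |v|) ^ N)) (N := N)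
    (fun u => by
      refine ((hb _).1.trans (hgrow u)).trans ?_
      rw [mul_assoc (1 + |v|)]
      exact le_mul_of_one_le_left (by positivity) hv)
    (fun u => by
      rw [norm_mul, Complex.norm_real, Real.norm_eq_abs, mul_assoc (1 + |v|)]
      gcongr
      · linarith
      · exact (hb _).2.trans (hgrow u))
    g h
    (fun u hu => by
      have hu' : (u : ℂ) ≠ 0 := by exact_mod_cast hu
      rw [hgh u hu, deltaOp, Complex.ofReal_div]
      field_simp)
  rw [Ftrans, Ftrans, key]
  ring

theorem exists_schwartz_eq_iterate_deltaOp (r : ℕ) {l : ℝ} (hl : -(1 / 2 : ℝ) < l) {n : ℕ}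
    (g : 𝓢(ℝ, ℂ)) (hg : InSn n g) (v : ℝ) {k : ℕ} (hk : k ≤ n) :
    ∃ h : 𝓢(ℝ, ℂ), (∀ u : ℝ, u ≠ 0 → h u = (fun F => deltaOp r l F)^[k] g u) ∧
      InSn (n - k) h ∧
      Ftrans r l h v = (-1 : ℂ) ^ k * (v : ℂ) ^ (2 * k) * Ftrans r l g v := by
  induction k with
  | zero => exact ⟨g, fun u _ => rfl, hg, by simp⟩
  | succ k ih =>
    obtain ⟨h, hh, hS, hF⟩ := ih (by omega)
    obtain ⟨h', hh', hS'⟩ := exists_schwartz_eq_deltaOp r l (n - k) (by omega) h hS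
    refine ⟨h', fun u hu => ?_, by rwa [Nat.sub_sub] at hS', ?_⟩
    · rw [hh' u hu, Function.iterate_succ_apply']
      exact deltaOp_congr r l hh hu
    · rw [Ftrans_eq_of_eq_deltaOp r hl h h' hh' v, hF]
      ring

/-- delta_lambda maps S_m(ℝ) into S_{m-1}(ℝ) ∩ S(ℝ) (extending by
continuity at the origin), and for g ∈ S_n(ℝ),
F_r^lambda(delta_lambda^n g)(v) = (-1)^n v^{2n} F_r^lambda(g)(v). -/
theorem stmt18 (r : ℕ) (l : ℝ) (hl : -(1 / 2 : ℝ) < l) (n : ℕ) (hn : 1 ≤ n) :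
    (∀ m : ℕ, 1 ≤ m → ∀ g : SchwartzMap ℝ ℂ, InSn m g →
      ∃ h : SchwartzMap ℝ ℂ,
        (∀ u : ℝ, u ≠ 0 → h u = deltaOp r l (⇑g) u) ∧ InSn (m - 1) h) ∧
    (∀ g : SchwartzMap ℝ ℂ, InSn n g → ∀ v : ℝ,
      Ftrans r l ((fun F => deltaOp r l F)^[n] ⇑g) v =
        (-1 : ℂ) ^ n * ((v : ℂ) ^ (2 * n)) * Ftrans r l (⇑g) v) := by
  refine ⟨fun m hm g hg => exists_schwartz_eq_deltaOp r l m hm g hg, fun g hg v => ?_⟩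
  obtain ⟨h, hh, -, hF⟩ := exists_schwartz_eq_iterate_deltaOp r hl g hg v le_rfl
  rw [← Ftrans_congr r l hh, hF]
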